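/- Let σ be a relational first-order language and let M and N be countable HH-homogeneous σ-structures with Age(M) = Age(N). Then M and N are H-equivalent: every embedding from a finite substructure of M into N extends to a homomorphism M → N, and every embedding from a finite substructure of N into M extends to a homomorphism N → M. -/

import Mathlib

/-!
A homomorphism `f : A → N` from a finite `A ≤ M` extends to every finite `B` with `A ≤ B ≤ M`: embed
`B` into `N` by some `e`, which the ages allow, and extend the homomorphism `f ∘ e⁻¹ : e(A) → f(A)`
between finite substructures of `N` to an endomorphism `g` of `N`; then `g ∘ e` extends `f`. Only
"forth" steps are needed to build a homomorphism, so exhausting the countable `M` by finite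
substructures and gluing extends `f` to all of `M`.
-/

open FirstOrder Language Structure

universe u v w

variable {L : FirstOrder.Language.{u, v}}

/-- `M` is HH-homogeneous: every homomorphism between finite substructures of `M`
extends to an endomorphism of `M`. -/
def IsHHHomogeneous (L : FirstOrder.Language.{u, v}) (M : Type w) [L.Structure M] : Prop :=
  ∀ (A B : L.Substructure M), (A : Set M).Finite → (B : Set M).Finite →
    ∀ f : A →[L] B, ∃ g : M →[L] M, ∀ a : A, g (a : M) = (f a : M)

/-- Every embedding from a finite substructure of `M` into `N` extends to a
homomorphism `M → N`. -/
def HomExtendable (L : FirstOrder.Language.{u, v}) (M N : Type w)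
    [L.Structure M] [L.Structure N] : Prop :=
  ∀ A : L.Substructure M, (A : Set M).Finite →
    ∀ f : A ↪[L] N, ∃ g : M →[L] N, ∀ a : A, g (a : M) = f a

universe w'

section

variable {M : Type w} {N : Type w'} [L.Structure M] [L.Structure N]

/-- `M` is locally finite: its finitely generated substructures are finite. This is what lets a
countable `M` be exhausted by finite substructures when the language has function symbols. -/
def IsLocallyFinite (L : FirstOrder.Language.{u, v}) (M : Type w) [L.Structure M] : Prop :=
  ∀ A : L.Substructure M, A.FG → Finite A

theorem isLocallyFinite_of_isRelational [L.IsRelational] : IsLocallyFinite L M :=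
  fun _ hA => hA.finite

theorem IsLocallyFinite.exists_monotone_iSup_eq_top [Countable M] (hM : IsLocallyFinite L M)
    (A : L.Substructure M) [Finite A] :
    ∃ S : ℕ →o L.Substructure M, S 0 = A ∧ (∀ k, Finite (S k)) ∧ ⨆ k, S k = ⊤ := by
  obtain ⟨c, hc⟩ := Countable.exists_injective_nat M
  have hmono : Monotone fun k => A ⊔ Substructure.closure L (c ⁻¹' Set.Iio k) := fun _ _ hij =>
    sup_le_sup_left (Substructure.closure_mono (Set.preimage_mono (Set.Iio_subset_Iio hij))) A
  refine ⟨⟨_, hmono⟩, by simp, fun k => hM _ ?_, eq_top_iff.2 fun m _ => ?_⟩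
  · exact Substructure.FG.of_finite.sup
      (Substructure.fg_closure ((Set.finite_Iio k).preimage hc.injOn))
  · have hm : m ∈ Substructure.closure L (c ⁻¹' Set.Iio (c m + 1)) :=
      Substructure.subset_closure (Nat.lt_succ_self (c m))
    exact le_iSup (fun k => A ⊔ Substructure.closure L (c ⁻¹' Set.Iio k)) (c m + 1)
      (le_sup_right (a := A) hm)

theorem exists_hom_of_directed_of_iSup_eq_top {ι : Type*} [Preorder ι] [IsDirectedOrder ι]
    [Nonempty ι] (S : ι →o L.Substructure M) (hS : ⨆ i, S i = ⊤) (p : ∀ i, S i →[L] N)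
    (hp : ∀ i j (hij : i ≤ j),
      (p j).comp (Substructure.inclusion (S.monotone hij)).toHom = p i) :
    ∃ g : M →[L] N, ∀ i, g.comp (S i).subtype.toHom = p i := by
  have hcover (m : M) : ∃ i, m ∈ S i :=
    (Substructure.mem_iSup_of_directed S.monotone.directed_le).1 (hS ▸ Substructure.mem_top m)
  choose idx hidx using hcover
  let g (m : M) : N := p (idx m) ⟨m, hidx m⟩
  have hg (i : ι) (x : S i) : g x = p i x := by
    obtain ⟨k, hk, hik⟩ := exists_ge_ge (idx x) i
    exact (DFunLike.congr_fun (hp _ k hk) ⟨x, hidx x⟩).symm.trans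
      (DFunLike.congr_fun (hp i k hik) x)
  have hlift {n : ℕ} (x : Fin n → M) :
      ∃ k, ∃ y : Fin n → S k, (S k).subtype ∘ y = x ∧ g ∘ x = p k ∘ y := by
    obtain ⟨k, hk⟩ := Finite.exists_le (idx ∘ x)
    let y (j : Fin n) : S k := ⟨x j, S.monotone (hk j) (hidx (x j))⟩
    exact ⟨k, y, rfl, funext fun j => hg k (y j)⟩
  refine ⟨⟨g, fun F x => ?_, fun R x hx => ?_⟩, fun i => Hom.ext (hg i)⟩
  · obtain ⟨k, y, rfl, hgy⟩ := hlift x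
    rw [hgy, ← (S k).subtype.map_fun, ← (p k).map_fun]
    exact hg k (funMap F y)
  · obtain ⟨k, y, rfl, hgy⟩ := hlift x
    rw [hgy]
    exact (p k).map_rel R y (((S k).subtype.map_rel R y).1 hx)

theorem exists_hom_of_forall_exists_succ (S : ℕ →o L.Substructure M) (hS : ⨆ k, S k = ⊤)
    (hext : ∀ k (p : S k →[L] N), ∃ q : S (k + 1) →[L] N,
      q.comp (Substructure.inclusion (S.monotone k.le_succ)).toHom = p)
    (f : S 0 →[L] N) :
    ∃ g : M →[L] N, g.comp (S 0).subtype.toHom = f := by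
  choose next hnext using hext
  let p : ∀ k, S k →[L] N := Nat.rec f next
  have hp (i j : ℕ) (hij : i ≤ j) :
      (p j).comp (Substructure.inclusion (S.monotone hij)).toHom = p i := by
    induction j, hij using Nat.le_induction with
    | base => rfl
    | succ j hij ih =>
      rw [← ih, ← hnext j (p j)]
      rfl
  obtain ⟨g, hg⟩ := exists_hom_of_directed_of_iSup_eq_top S hS p hp
  exact ⟨g, hg 0⟩

theorem IsHHHomogeneous.exists_endomorphism_comp_eq (hN : IsHHHomogeneous L N) {A : Type*}
    [L.Structure A] [Finite A] (e : A ↪[L] N) (f : A →[L] N) :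
    ∃ g : N →[L] N, g.comp e.toHom = f := by
  let onRange : e.toHom.range →[L] f.range :=
    (f.codRestrict f.range f.mem_range_self).comp e.equivRange.symm.toHom
  have hfinite (h : A →[L] N) : (h.range : Set N).Finite := h.range_coe ▸ Set.finite_range h
  obtain ⟨g, hg⟩ := hN _ _ (hfinite e.toHom) (hfinite f) onRange
  refine ⟨g, Hom.ext fun a => (hg (e.equivRange a)).trans ?_⟩
  exact congrArg f (e.equivRange.symm_apply_apply a)

theorem IsHHHomogeneous.exists_comp_eq (hN : IsHHHomogeneous L N) {A B : Type*} [L.Structure A]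
    [L.Structure B] [Finite A] (i : A ↪[L] B) (e : B ↪[L] N) (f : A →[L] N) :
    ∃ q : B →[L] N, q.comp i.toHom = f := by
  obtain ⟨g, hg⟩ := hN.exists_endomorphism_comp_eq (e.comp i) f
  exact ⟨g.comp e.toHom, hg⟩

theorem h_equivalent_of_hh_homogeneous_general [Countable M] (hM : IsLocallyFinite L M)
    (hN : IsHHHomogeneous L N)
    (hage : ∀ B : L.Substructure M, Finite B → Nonempty (B ↪[L] N))
    (A : L.Substructure M) [Finite A] (f : A →[L] N) :
    ∃ g : M →[L] N, g.comp A.subtype.toHom = f := by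
  obtain ⟨S, rfl, hfinite, hS⟩ := hM.exists_monotone_iSup_eq_top A
  refine exists_hom_of_forall_exists_succ S hS (fun k p => ?_) f
  obtain ⟨e⟩ := hage (S (k + 1)) (hfinite (k + 1))
  exact hN.exists_comp_eq (Substructure.inclusion (S.monotone k.le_succ)) e p

end

theorem homExtendable_of_isHHHomogeneous [L.IsRelational] {M N : Type w} [L.Structure M]
    [L.Structure N] [Countable M] (hN : IsHHHomogeneous L N)
    (hage : ∀ B : L.Substructure M, Finite B → Nonempty (B ↪[L] N)) : HomExtendable L M N := by
  intro A hA f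
  have : Finite A := hA
  obtain ⟨g, hg⟩ := h_equivalent_of_hh_homogeneous_general isLocallyFinite_of_isRelational hN hage
    A f.toHom
  exact ⟨g, DFunLike.congr_fun hg⟩

theorem h_equivalent_of_hh_homogeneous (L : FirstOrder.Language.{u, v}) [L.IsRelational]
    (M N : Type w) [L.Structure M] [L.Structure N] [Countable M] [Countable N]
    (hM : IsHHHomogeneous L M) (hN : IsHHHomogeneous L N)
    (hage : ∀ (B : Type w) [L.Structure B], Finite B →
      (Nonempty (B ↪[L] M) ↔ Nonempty (B ↪[L] N))) :
    HomExtendable L M N ∧ HomExtendable L N M :=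
  ⟨homExtendable_of_isHHHomogeneous hN fun B hB => (hage B hB).1 ⟨B.subtype⟩,
    homExtendable_of_isHHHomogeneous hM fun B hB => (hage B hB).2 ⟨B.subtype⟩⟩
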